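/- Let s ∈ ℝ and k ≥ 1 with k + s > 1. For all G₁,…,G_k ∈ A₊, the family ( η(G₁,H₁)⋯η(G_k,H_k) / |Q|^{k+s} ), indexed by (H₁,…,H_k) ∈ (A₊)^k with Q = [H₁,…,H_k], is absolutely summable and σ_s((G₁,…,G_k)) / |(G₁,…,G_k)|^s = ζ_A(k+s) · Σ_{H₁,…,H_k ∈ A₊} η(G₁,H₁)⋯η(G_k,H_k) / |Q|^{k+s}. -/

import Mathlib

/-!
Write `t = k + s > 1`, let `g = (G₁,…,G_k)`, and let `d(N)` be the number of monic divisors of `N`.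

Since `E(G, RH)(RD) = E(G, H)(D)`, sorting the residues `D` modulo `N` by `gcd(D, N)` gives
`Σ_{H ∣ N} η(G,H) = Σ_{D mod N} E(G,N)(D)`. By orthogonality (the trace form is nonzero, so `E(G,N)`
is a nontrivial character unless `N ∣ G`) this is `|N|` if `N ∣ G` and `0` otherwise
(`sum_eta_divisors`).

Multiply the right-hand series by `ζ_A(t) = Σ_M |M|^{-t}` and substitute `N = M · [H₁,…,H_k]`: the
result is the sum of `η(G₁,H₁)⋯η(G_k,H_k) / |N|^t` over all `(N; H₁,…,H_k)` with every `H_i ∣ N`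
(`pairTerm`, `tsum_pairTerm_lcmPair`). Summing over the `H_i` first, the inner sum factors, and by the
identity above it equals `|N|^{k-t} = |N|^{-s}` if `N` divides `g`, and `0` otherwise
(`tsum_pairTerm_fiber`). Finally `Σ_{N ∣ g} |N|^{-s} = σ_s(g) / |g|^s` by `N ↦ g / N` (`sigmaS_div`).

The rearrangement needs absolute convergence. Inclusion-exclusion over the primes dividing `H`
gives `|η(G,H)| ≤ d(H) |G|` (`norm_eta_le`), so the absolute values are dominated by a constant times
`Σ_N d(N)^{2k} |N|^{-t}`, which converges because `d` is submultiplicative (`summable_card_pow`).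
-/

open Polynomial UniqueFactorizationMonoid

variable (p : ℕ) [Fact p.Prime] (F : Type) [Field F] [Fintype F] [DecidableEq F]
  [Algebra (ZMod p) F]

/-- The absolute value `|G| = q ^ deg G` of a polynomial over `𝔽_q`. -/
def anorm (G : Polynomial F) : ℕ := Fintype.card F ^ G.natDegree

/-- `t_H(A')`: the coefficient of `T^(m-1)` in the remainder of `A'` upon division by `H`,
where `m = deg H`. -/
noncomputable def tmap (H A' : Polynomial F) : F := (A' % H).coeff (H.natDegree - 1)

/-- The additive character `E(G,H)(D) = exp(2πi · tr(t_H(G·D)) / p)`. -/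
noncomputable def echar (G H D : Polynomial F) : ℂ :=
  Complex.exp (2 * Real.pi * Complex.I *
    ((Algebra.trace (ZMod p) F (tmap F H (G * D))).val : ℂ) / (p : ℂ))

open scoped Classical in
/-- `ω(G)`: the number of distinct monic irreducible divisors of `G`. -/
noncomputable def omega (G : Polynomial F) : ℕ := (normalizedFactors G).toFinset.card

open scoped Classical in
/-- The Möbius function on `𝔽_q[T]`. -/
noncomputable def mu (G : Polynomial F) : ℤ :=
  if Squarefree G then (-1) ^ omega F G else 0

/-- The polynomial Ramanujan sum `η(G,H)`: the sum of `E(G,H)(D)` over a complete residue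
system `D` modulo `H` with `(D,H) = 1`. -/
noncomputable def eta (G H : Polynomial F) : ℂ :=
  ∑' D : {D : Polynomial F // D.degree < H.degree ∧ IsCoprime D H}, echar p F G H D.1

open scoped Classical in
/-- The unitary gcd `(G,H)_*`: the monic polynomial of highest degree dividing `G` and
unitarily dividing `H`. -/
noncomputable def ugcd (G H : Polynomial F) : Polynomial F :=
  ∏ P ∈ (normalizedFactors H).toFinset,
    if P ^ (normalizedFactors H).count P ∣ G then P ^ (normalizedFactors H).count P else 1

/-- `μ*(G) = (-1)^(ω(G))`. -/
noncomputable def muStar (G : Polynomial F) : ℤ := (-1) ^ omega F G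

/-- The unitary polynomial Ramanujan sum `η*(G,H)`: the sum of `E(G,H)(D)` over a complete
residue system `D` modulo `H` with `(D,H)_* = 1`. -/
noncomputable def etaStar (G H : Polynomial F) : ℂ :=
  ∑' D : {D : Polynomial F // D.degree < H.degree ∧ ugcd F D H = 1}, echar p F G H D.1

/-- `σ_s(G) = Σ_{D ∣ G, D monic} |D|^s`. -/
noncomputable def sigmaS (s : ℝ) (G : Polynomial F) : ℝ :=
  ∑' D : {D : Polynomial F // D.Monic ∧ D ∣ G}, (anorm F D.1 : ℝ) ^ s

/-- The Jordan totient `φ_s(G) = Σ_{D ∣ G, D monic} μ(G/D) |D|^s`, written as a sum over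
pairs of monic polynomials with `D · E = G`. -/
noncomputable def phiS (s : ℝ) (G : Polynomial F) : ℝ :=
  ∑' DE : {DE : Polynomial F × Polynomial F //
      DE.1.Monic ∧ DE.2.Monic ∧ DE.1 * DE.2 = G},
    (mu F DE.1.2 : ℝ) * (anorm F DE.1.1 : ℝ) ^ s

/-- The zeta function of `A = 𝔽_q[T]`: `ζ_A(s) = Σ_{G monic} 1/|G|^s`. -/
noncomputable def zetaA (s : ℝ) : ℝ :=
  ∑' G : {G : Polynomial F // G.Monic}, 1 / (anorm F G.1 : ℝ) ^ s

set_option linter.unusedSectionVars false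

section Ramanujan
open scoped Classical

/-! ### Residues, the character `E(G,H)`, and complete character sums -/

lemma finite_degree_lt (n : ℕ) : {D : F[X] | D.degree < n}.Finite := by
  have : Finite (degreeLT F n) := Finite.of_equiv _ (degreeLTEquiv F n).toEquiv.symm
  exact (Set.toFinite (degreeLT F n : Set F[X])).subset fun D hD => mem_degreeLT.2 hD

/-- The standard complete residue system modulo `H`: polynomials of degree `< deg H`. -/
noncomputable def residues (H : F[X]) : Finset F[X] := (finite_degree_lt F H.natDegree).toFinset

variable {F}

lemma mem_residues {H D : F[X]} (hH : H ≠ 0) : D ∈ residues F H ↔ D.degree < H.degree := by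
  simp [residues, degree_eq_natDegree hH]

lemma card_residues (H : F[X]) : (residues F H).card = anorm F H := by
  have h : Nat.card (degreeLT F H.natDegree) = anorm F H := by
    rw [Nat.card_congr (degreeLTEquiv F H.natDegree).toEquiv, Nat.card_eq_fintype_card]
    simp [anorm]
  rw [← h, residues, ← Set.ncard_eq_toFinset_card _ (finite_degree_lt F _), ← Nat.card_coe_set_eq]
  exact Nat.card_congr (Equiv.subtypeEquivRight fun D => by simp [mem_degreeLT])

lemma anorm_pos (G : F[X]) : 0 < anorm F G := pow_pos Fintype.card_pos _

lemma anorm_mul {G H : F[X]} (hG : G.Monic) (hH : H.Monic) :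
    anorm F (G * H) = anorm F G * anorm F H := by
  simp [anorm, hG.natDegree_mul hH, pow_add]

lemma anorm_le_of_dvd {G H : F[X]} (hH : H ≠ 0) (h : G ∣ H) : anorm F G ≤ anorm F H :=
  Nat.pow_le_pow_right Fintype.card_pos (natDegree_le_of_dvd h hH)

lemma echar_eq (G H D : F[X]) :
    echar p F G H D = ZMod.stdAddChar (Algebra.trace (ZMod p) F (tmap F H (G * D))) := by
  rw [ZMod.stdAddChar_apply, ZMod.toCircle_apply]; rfl

lemma echar_add (G H D E : F[X]) :
    echar p F G H (D + E) = echar p F G H D * echar p F G H E := by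
  have : tmap F H (G * (D + E)) = tmap F H (G * D) + tmap F H (G * E) := by
    simp [tmap, mul_add, add_mod]
  rw [echar_eq, echar_eq, echar_eq, this, map_add, AddChar.map_add_eq_mul]

lemma echar_of_dvd {G H : F[X]} (h : H ∣ G) (D : F[X]) : echar p F G H D = 1 := by
  have : tmap F H (G * D) = 0 := by
    simp [tmap, EuclideanDomain.mod_eq_zero.2 (h.mul_right D)]
  rw [echar_eq, this, map_zero, AddChar.map_zero_eq_one]

/-- The coefficient `t_H` is compatible with cancelling a common monic factor of the numerator
and the denominator. -/
lemma tmap_mul_left {R H : F[X]} (hR : R.Monic) (hH : H.Monic) (A : F[X]) :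
    tmap F (R * H) (R * A) = tmap F H A := by
  have hmod : (R * A) % (R * H) = R * (A % H) := by
    rw [Polynomial.mod_def, Polynomial.mod_def, (hR.mul hH).leadingCoeff, hH.leadingCoeff]
    simp only [inv_one, C_1, mul_one]
    have hA := modByMonic_add_div A H
    refine (div_modByMonic_unique (A /ₘ H) (R * (A %ₘ H)) (hR.mul hH) ⟨?_, ?_⟩).2
    · calc _ = R * (A %ₘ H + H * (A /ₘ H)) := by ring
        _ = _ := by rw [hA]
    · rw [degree_mul, degree_mul]
      exact WithBot.add_lt_add_left (by simpa using hR.ne_zero) (degree_modByMonic_lt A hH)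
  unfold tmap
  rw [hmod]
  rcases Nat.eq_zero_or_pos H.natDegree with h0 | h0
  · have : H = 1 := hH.natDegree_eq_zero.1 h0
    subst this
    simp [EuclideanDomain.mod_one]
  · rw [hR.natDegree_mul hH, Nat.add_sub_assoc h0,
      coeff_mul_add_eq_of_natDegree_le le_rfl, coeff_natDegree, hR.leadingCoeff, one_mul]
    rcases eq_or_ne (A % H) 0 with h | h
    · simp [h]
    · have := natDegree_lt_natDegree h (EuclideanDomain.mod_lt A hH.ne_zero)
      omega

lemma echar_mul_left {R H : F[X]} (hR : R.Monic) (hH : H.Monic) (G D : F[X]) :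
    echar p F G (R * H) (R * D) = echar p F G H D := by
  rw [echar_eq, echar_eq, mul_left_comm, tmap_mul_left hR hH]

/-- `E(G,H)` is a nontrivial character as soon as `H ∤ G`. -/
lemma exists_echar_ne_one {G H : F[X]} (hH : H.Monic) (h : ¬ H ∣ G) :
    ∃ D ∈ residues F H, echar p F G H D ≠ 1 := by
  set A := G % H with hA
  have hA0 : A ≠ 0 := fun h0 => h (EuclideanDomain.mod_eq_zero.1 h0)
  have hlt : A.natDegree < H.natDegree :=
    natDegree_lt_natDegree hA0 (EuclideanDomain.mod_lt G hH.ne_zero)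
  have hlc : A.leadingCoeff ≠ 0 := leadingCoeff_ne_zero.2 hA0
  obtain ⟨y, hy⟩ := Algebra.trace_surjective (ZMod p) F 1
  -- The monomial lifts the leading term of `G mod H` to degree `deg H - 1`.
  let D : F[X] := C (y / A.leadingCoeff) * X ^ (H.natDegree - 1 - A.natDegree)
  have hdeg : D.natDegree ≤ H.natDegree - 1 - A.natDegree := natDegree_C_mul_X_pow_le _ _
  have hAD : (A * D).natDegree ≤ H.natDegree - 1 :=
    natDegree_mul_le.trans (by omega)
  have hsmall : ∀ B : F[X], B.natDegree ≤ H.natDegree - 1 → B.degree < H.degree := fun B hB =>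
    degree_lt_degree (by omega)
  have htm : tmap F H (G * D) = y := by
    have hmod : (G * D) % H = A * D := by
      rw [mul_mod, ← hA, (mod_eq_self_iff hH.ne_zero).2 (hsmall D (by omega)),
        (mod_eq_self_iff hH.ne_zero).2 (hsmall _ hAD)]
    rw [tmap, hmod, show H.natDegree - 1 = A.natDegree + (H.natDegree - 1 - A.natDegree) by omega,
      coeff_mul_add_eq_of_natDegree_le le_rfl hdeg]
    simp only [D, coeff_C_mul_X_pow, if_true, coeff_natDegree]
    field_simp
  refine ⟨D, (mem_residues hH.ne_zero).2 (hsmall D (by omega)), ?_⟩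
  rw [echar_eq, htm, hy]
  intro h1
  rw [← AddChar.map_zero_eq_one (ZMod.stdAddChar (N := p))] at h1
  have : Fact (1 < p) := ⟨(Fact.out : p.Prime).one_lt⟩
  exact one_ne_zero (ZMod.injective_stdAddChar h1)

/-- Orthogonality: the complete character sum modulo `H`. -/
lemma sum_echar (G : F[X]) {H : F[X]} (hH : H.Monic) :
    ∑ D ∈ residues F H, echar p F G H D = if H ∣ G then (anorm F H : ℂ) else 0 := by
  split_ifs with h
  · rw [Finset.sum_congr rfl fun D _ => echar_of_dvd p h D]
    simp [card_residues]
  · obtain ⟨E, hE, hE1⟩ := exists_echar_ne_one p hH h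
    have hmem := fun D : F[X] => mem_residues (D := D) hH.ne_zero
    have hshift : ∑ D ∈ residues F H, echar p F G H D
        = ∑ D ∈ residues F H, echar p F G H D * echar p F G H E := by
      refine Finset.sum_nbij' (fun D => D - E) (fun D => D + E) ?_ ?_ ?_ ?_ ?_
      · intro D hD
        rw [hmem] at *
        exact (degree_sub_le _ _).trans_lt (max_lt hD hE)
      · intro D hD
        rw [hmem] at *
        exact (degree_add_le _ _).trans_lt (max_lt hD hE)
      · simp
      · simp
      · intro D _
        rw [← echar_add, sub_add_cancel]
    rw [← Finset.sum_mul] at hshift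
    by_contra h0
    exact hE1 (mul_left_cancel₀ h0 (by rw [← hshift, mul_one]))

/-- Character sum over a set of residues which are all divisible by a given monic divisor `R` of
the modulus. -/
lemma sum_echar_multiples (G : F[X]) {R K : F[X]} (hR : R.Monic) (hK : K.Monic)
    (P : F[X] → Prop) [DecidablePred P] [DecidablePred fun D => P (R * D)]
    (hP : ∀ D, P D → R ∣ D) :
    ∑ D ∈ residues F (R * K) with P D, echar p F G (R * K) D
      = ∑ D ∈ residues F K with P (R * D), echar p F G K D := by
  symm
  refine Finset.sum_bij (fun D _ => R * D) ?_ ?_ ?_ ?_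
  · intro D hD
    rw [Finset.mem_filter, mem_residues hK.ne_zero] at hD
    rw [Finset.mem_filter, mem_residues (hR.mul hK).ne_zero, degree_mul, degree_mul]
    exact ⟨WithBot.add_lt_add_left (by simpa using hR.ne_zero) hD.1, hD.2⟩
  · intro D _ E _ h
    exact mul_left_cancel₀ hR.ne_zero h
  · intro D hD
    rw [Finset.mem_filter, mem_residues (hR.mul hK).ne_zero] at hD
    obtain ⟨hD, hPD⟩ := hD
    obtain ⟨E, rfl⟩ := hP _ hPD
    refine ⟨E, ?_, rfl⟩
    rw [degree_mul, degree_mul] at hD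
    rw [Finset.mem_filter, mem_residues hK.ne_zero]
    exact ⟨lt_of_add_lt_add_left hD, hPD⟩
  · intro D _
    rw [echar_mul_left p hR hK]

lemma eta_eq_sum (G : F[X]) {H : F[X]} (hH : H.Monic) :
    _root_.eta p F G H = ∑ D ∈ residues F H with IsCoprime D H, echar p F G H D := by
  unfold _root_.eta
  rw [← Finset.tsum_subtype]
  refine tsum_congr_set_coe (echar p F G H) ?_
  ext D
  simp only [Finset.coe_filter, mem_residues hH.ne_zero]
  rfl

/-! ### Monic divisors and the convolution identity for `η` -/

/-- The finite set of monic divisors of a nonzero polynomial `N`. -/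
noncomputable def monicDivisors (N : F[X]) : Finset F[X] :=
  (finite_degree_lt F (N.natDegree + 1)).toFinset.filter fun D => D.Monic ∧ D ∣ N

lemma mem_monicDivisors {N D : F[X]} (hN : N ≠ 0) :
    D ∈ monicDivisors N ↔ D.Monic ∧ D ∣ N := by
  simp only [monicDivisors, Finset.mem_filter, Set.Finite.mem_toFinset, Set.mem_ofPred_eq,
    and_iff_right_iff_imp]
  intro h
  rw [degree_eq_natDegree h.1.ne_zero]
  exact_mod_cast Nat.lt_succ_of_le (natDegree_le_of_dvd h.2 hN)

lemma monic_of_mul_left {A B : F[X]} (hA : A.Monic) (hAB : (A * B).Monic) : B.Monic := by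
  have := hAB.leadingCoeff
  rw [leadingCoeff_mul, hA.leadingCoeff, one_mul] at this
  exact this

lemma monicDivisors_div {N R : F[X]} (hN : N.Monic) (hR : R ∈ monicDivisors N) :
    R.Monic ∧ R * (N / R) = N ∧ (N / R).Monic := by
  rw [mem_monicDivisors hN.ne_zero] at hR
  have h := EuclideanDomain.mul_div_cancel' hR.1.ne_zero hR.2
  exact ⟨hR.1, h, monic_of_mul_left hR.1 (by rwa [h])⟩

lemma div_mem_monicDivisors {N R : F[X]} (hN : N.Monic) (hR : R ∈ monicDivisors N) :
    N / R ∈ monicDivisors N := by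
  obtain ⟨-, h2, h3⟩ := monicDivisors_div hN hR
  exact (mem_monicDivisors hN.ne_zero).2 ⟨h3, Dvd.intro_left _ h2⟩

lemma div_div_monicDivisors {N R : F[X]} (hN : N.Monic) (hR : R ∈ monicDivisors N) :
    N / (N / R) = R := by
  obtain ⟨-, h2, h3⟩ := monicDivisors_div hN hR
  conv_lhs => rw [← h2]
  rw [h2]
  exact EuclideanDomain.eq_div_of_mul_eq_left h3.ne_zero h2 |>.symm

lemma monic_of_normalize_eq {A : F[X]} (h0 : A ≠ 0) (h : normalize A = A) : A.Monic :=
  h ▸ monic_normalize h0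

/-- `Σ_{H ∣ N} η(G,H) = |N|` if `N ∣ G` and `0` otherwise: split the residues `D` modulo `N`
according to `gcd(D, N)`. -/
lemma sum_eta_divisors (G : F[X]) {N : F[X]} (hN : N.Monic) :
    ∑ H ∈ monicDivisors N, _root_.eta p F G H = if N ∣ G then (anorm F N : ℂ) else 0 := by
  rw [← sum_echar p G hN]
  have hmaps : ∀ D ∈ residues F N, gcd D N ∈ monicDivisors N := fun D _ =>
    (mem_monicDivisors hN.ne_zero).2 ⟨monic_of_normalize_eq
      (fun h => hN.ne_zero ((gcd_eq_zero_iff _ _).1 h).2) (normalize_gcd _ _), gcd_dvd_right _ _⟩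
  rw [← Finset.sum_fiberwise_of_maps_to hmaps]
  refine Finset.sum_nbij' (fun H => N / H) (fun R => N / R)
    (fun R hR => div_mem_monicDivisors hN hR) (fun R hR => div_mem_monicDivisors hN hR)
    (fun R hR => div_div_monicDivisors hN hR) (fun R hR => div_div_monicDivisors hN hR) ?_
  intro H hH
  obtain ⟨h1, h2, h3⟩ := monicDivisors_div hN hH
  generalize N / H = R at h2 h3 ⊢
  subst h2
  rw [eta_eq_sum p G h1, mul_comm H R,
    sum_echar_multiples p G h3 h1 (fun D => gcd D (R * H) = R) (fun D h => h ▸ gcd_dvd_left _ _)]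
  refine Finset.sum_congr (Finset.filter_congr fun D _ => ?_) fun _ _ => rfl
  rw [gcd_mul_left, h3.normalize_eq_self, ← gcd_isUnit_iff, mul_eq_left₀ h3.ne_zero,
    ← normalize_eq_one, normalize_gcd]

/-! ### The bound `|η(G,H)| ≤ d(H)|G|` -/

lemma monicDivisors_subset {M N : F[X]} (hN : N ≠ 0) (h : M ∣ N) :
    monicDivisors M ⊆ monicDivisors N := by
  have hM : M ≠ 0 := fun h0 => hN (by simpa [h0] using h)
  intro D hD
  rw [mem_monicDivisors hM] at hD
  exact (mem_monicDivisors hN).2 ⟨hD.1, hD.2.trans h⟩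

lemma isCoprime_iff_normalizedFactors {D H : F[X]} (hH : H ≠ 0) :
    IsCoprime D H ↔ ∀ P ∈ (normalizedFactors H).toFinset, ¬ P ∣ D := by
  constructor
  · intro h P hP hPD
    rw [Multiset.mem_toFinset] at hP
    exact (irreducible_of_normalized_factor P hP).not_isUnit
      (h.isUnit_of_dvd' hPD (dvd_of_mem_normalizedFactors hP))
  · intro h
    refine isCoprime_of_irreducible_dvd (fun h0 => hH h0.2) fun z hz hzD hzH => ?_
    obtain ⟨P, hP, hzP⟩ := exists_mem_normalizedFactors_of_dvd hH hz hzH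
    exact h P (Multiset.mem_toFinset.2 hP) (hzP.symm.dvd.trans hzD)

lemma monic_of_mem_normalizedFactors {P H : F[X]}
    (hP : P ∈ (normalizedFactors H).toFinset) : P.Monic := by
  rw [Multiset.mem_toFinset] at hP
  exact monic_of_normalize_eq (irreducible_of_normalized_factor P hP).ne_zero
    (normalize_normalized_factor P hP)

lemma eq_of_dvd_of_mem_normalizedFactors {P Q H : F[X]}
    (hP : P ∈ (normalizedFactors H).toFinset) (hQ : Q ∈ (normalizedFactors H).toFinset)
    (h : P ∣ Q) : P = Q :=
  eq_of_monic_of_associated (monic_of_mem_normalizedFactors hP)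
    (monic_of_mem_normalizedFactors hQ)
    ((irreducible_of_normalized_factor P (Multiset.mem_toFinset.1 hP)).associated_of_dvd
      (irreducible_of_normalized_factor Q (Multiset.mem_toFinset.1 hQ)) h)

lemma prod_dvd_iff_of_subset {H : F[X]} {t : Finset F[X]}
    (ht : t ⊆ (normalizedFactors H).toFinset) (D : F[X]) :
    ∏ P ∈ t, P ∣ D ↔ ∀ P ∈ t, P ∣ D := by
  refine ⟨fun h P hP => (Finset.dvd_prod_of_mem _ hP).trans h, fun h => ?_⟩
  refine Finset.prod_dvd_of_coprime (s := fun P => P) (fun P hP Q hQ hPQ => ?_) h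
  refine (irreducible_of_normalized_factor P
    (Multiset.mem_toFinset.1 (ht hP))).coprime_iff_not_dvd.2 fun hd => hPQ ?_
  exact eq_of_dvd_of_mem_normalizedFactors (ht hP) (ht hQ) hd

/-- Distinct sets of prime factors of `H` have distinct products, so `2 ^ ω(H) ≤ d(H)`. -/
lemma card_powerset_le {H : F[X]} (hH : H ≠ 0) :
    (normalizedFactors H).toFinset.powerset.card ≤ (monicDivisors H).card := by
  refine Finset.card_le_card_of_injOn (fun t => ∏ P ∈ t, P) (fun t ht => ?_) ?_
  · have ht := Finset.mem_powerset.1 ht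
    refine (mem_monicDivisors hH).2
      ⟨monic_prod_of_monic _ _ fun P hP => monic_of_mem_normalizedFactors (ht hP),
        (prod_dvd_iff_of_subset ht H).2 fun P hP =>
          dvd_of_mem_normalizedFactors (Multiset.mem_toFinset.1 (ht hP))⟩
  · have key : ∀ t ⊆ (normalizedFactors H).toFinset, ∀ u ⊆ (normalizedFactors H).toFinset,
        ∏ P ∈ t, P = ∏ P ∈ u, P → t ⊆ u := by
      intro t ht u hu h P hP
      have hd : P ∣ ∏ Q ∈ u, Q := h ▸ Finset.dvd_prod_of_mem (fun P => P) hP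
      have hprime := prime_of_normalized_factor P (Multiset.mem_toFinset.1 (ht hP))
      obtain ⟨Q, hQ, hPQ⟩ := (hprime.dvd_finsetProd_iff _).1 hd
      rwa [eq_of_dvd_of_mem_normalizedFactors (ht hP) (hu hQ) hPQ]
    intro t ht u hu h
    have ht := Finset.mem_powerset.1 ht
    have hu := Finset.mem_powerset.1 hu
    exact (key t ht u hu h).antisymm (key u hu t ht h.symm)

/-- Inclusion-exclusion over the prime divisors of `H` writes `η(G,H)` as a signed sum of at most
`d(H)` sums of a character over subgroups, each of which is `0` or `|K|` with `K ∣ G`. -/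
lemma norm_eta_le {G H : F[X]} (hG : G.Monic) (hH : H.Monic) :
    ‖_root_.eta p F G H‖ ≤ (monicDivisors H).card * (anorm F G : ℝ) := by
  set S := (normalizedFactors H).toFinset with hS
  have hind : ∀ D : F[X], (if IsCoprime D H then echar p F G H D else 0) =
      ∑ t ∈ S.powerset, (-1) ^ t.card * (if ∏ P ∈ t, P ∣ D then echar p F G H D else 0) := by
    intro D
    have h1 : (if IsCoprime D H then (1 : ℂ) else 0) =
        ∏ P ∈ S, (1 + if P ∣ D then (-1 : ℂ) else 0) := by
      have : ∀ P ∈ S, (1 + if P ∣ D then (-1 : ℂ) else 0) = if ¬ P ∣ D then 1 else 0 := by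
        intro P _
        split_ifs <;> simp_all
      rw [Finset.prod_congr rfl this, Finset.prod_ite_zero, Finset.prod_const_one]
      simp only [isCoprime_iff_normalizedFactors hH.ne_zero, hS]
    rw [Finset.prod_one_add] at h1
    calc _ = (if IsCoprime D H then (1 : ℂ) else 0) * echar p F G H D := by
          split_ifs <;> simp
      _ = _ := by
        rw [h1, Finset.sum_mul]
        refine Finset.sum_congr rfl fun t ht => ?_
        rw [Finset.prod_ite_zero, Finset.prod_const]
        simp only [prod_dvd_iff_of_subset (Finset.mem_powerset.1 ht)]
        split_ifs <;> simp
  rw [eta_eq_sum p G hH, Finset.sum_filter, Finset.sum_congr rfl fun D _ => hind D,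
    Finset.sum_comm]
  have hterm : ∀ t ∈ S.powerset, ‖∑ D ∈ residues F H, (-1) ^ t.card *
      (if ∏ P ∈ t, P ∣ D then echar p F G H D else 0)‖ ≤ (anorm F G : ℝ) := by
    intro t ht
    have ht := Finset.mem_powerset.1 ht
    have hR : (∏ P ∈ t, P).Monic :=
      monic_prod_of_monic _ _ fun P hP => monic_of_mem_normalizedFactors (ht hP)
    obtain ⟨K, hK⟩ : ∏ P ∈ t, P ∣ H := (prod_dvd_iff_of_subset ht H).2 fun P hP =>
      dvd_of_mem_normalizedFactors (Multiset.mem_toFinset.1 (ht hP))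
    generalize ∏ P ∈ t, P = R at hR hK
    have hKm : K.Monic := monic_of_mul_left hR (hK ▸ hH)
    rw [← Finset.mul_sum, norm_mul, ← Finset.sum_filter, hK,
      sum_echar_multiples p G hR hKm (fun D => R ∣ D) fun _ h => h]
    simp only [dvd_mul_right, Finset.filter_true, sum_echar p G hKm, norm_pow, norm_neg,
      norm_one, one_pow, one_mul]
    split_ifs with h
    · simpa using anorm_le_of_dvd hG.ne_zero h
    · simp
  calc _ ≤ ∑ t ∈ S.powerset, (anorm F G : ℝ) := norm_sum_le_of_le _ hterm
    _ = S.powerset.card * (anorm F G : ℝ) := by rw [Finset.sum_const, nsmul_eq_mul]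
    _ ≤ _ := by
      gcongr
      exact card_powerset_le hH.ne_zero

/-! ### Summability of divisor sums -/

/-- There are `q ^ n` monic polynomials of degree `n`, so `Σ |N|^{-t}` is dominated by a geometric
series with ratio `q ^ (1 - t)`. -/
lemma summable_anorm {t : ℝ} (ht : 1 < t) :
    Summable fun N : {N : F[X] // N.Monic} => ((anorm F N.1 : ℝ) ^ t)⁻¹ := by
  have hq : (1 : ℝ) < Fintype.card F := by exact_mod_cast Fintype.one_lt_card
  have hq0 : (0 : ℝ) < Fintype.card F := by linarith
  let g : (Σ n : ℕ, (Fin n → F)) → ℝ := fun x => (((Fintype.card F : ℝ) ^ x.1) ^ t)⁻¹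
  have hg : Summable g := by
    refine (summable_sigma_of_nonneg fun x => by positivity).2
      ⟨fun n => Summable.of_finite, ?_⟩
    have : ∀ n : ℕ, ∑' c : Fin n → F, g ⟨n, c⟩ = ((Fintype.card F : ℝ) ^ (1 - t)) ^ n := by
      intro n
      simp only [g, tsum_fintype, Finset.sum_const, nsmul_eq_mul, Finset.card_univ, Fintype.card_fun, Fintype.card_fin, Nat.cast_pow]
      rw [← Real.rpow_natCast, ← Real.rpow_natCast, ← Real.rpow_mul hq0.le, ← Real.rpow_neg hq0.le,
        ← Real.rpow_mul hq0.le, ← Real.rpow_add hq0]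
      ring_nf
    simp only [this]
    refine summable_geometric_of_lt_one (by positivity) ?_
    exact Real.rpow_lt_one_of_one_lt_of_neg hq (by linarith)
  let decode : (Σ n : ℕ, (Fin n → F)) → F[X] := fun x =>
    X ^ x.1 + ∑ i : Fin x.1, C (x.2 i) * X ^ (i : ℕ)
  let e : {N : F[X] // N.Monic} → Σ n : ℕ, (Fin n → F) := fun N =>
    ⟨N.1.natDegree, fun i => N.1.coeff i⟩
  have hde : ∀ N, decode (e N) = N.1 := by
    intro N
    conv_rhs => rw [N.2.as_sum, ← Fin.sum_univ_eq_sum_range fun i => C (N.1.coeff i) * X ^ i]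
  have he : Function.Injective e := fun M N h =>
    Subtype.ext (by rw [← hde M, ← hde N, h])
  refine (hg.comp_injective he).congr fun N => ?_
  simp [g, e, anorm]

lemma card_monicDivisors_mul_le {A B : F[X]} (hA : A.Monic) (hB : B.Monic) :
    (monicDivisors (A * B)).card ≤ (monicDivisors A).card * (monicDivisors B).card := by
  refine le_trans (Finset.card_le_card ?_) (Finset.card_image₂_le (· * ·) _ _)
  intro D hD
  rw [mem_monicDivisors (hA.mul hB).ne_zero] at hD
  obtain ⟨a, b, ha, hb, rfl⟩ := exists_dvd_and_dvd_of_dvd_mul hD.2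
  have h0 := mul_ne_zero_iff.1 hD.1.ne_zero
  refine Finset.mem_image₂.2 ⟨normalize a, ?_, normalize b, ?_, ?_⟩
  · exact (mem_monicDivisors hA.ne_zero).2 ⟨monic_normalize h0.1, normalize_dvd_iff.2 ha⟩
  · exact (mem_monicDivisors hB.ne_zero).2 ⟨monic_normalize h0.2, normalize_dvd_iff.2 hb⟩
  · exact eq_of_monic_of_associated ((monic_normalize h0.1).mul (monic_normalize h0.2)) hD.1
      ((normalize_associated a).mul_mul (normalize_associated b))

/-- `Σ d(N)^m |N|^{-t} < ∞`. In the induction step `Σ_N d(N)^{m+1} |N|^{-t}` is rewritten as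
`Σ_{A,B} d(AB)^m |AB|^{-t}`, which submultiplicativity of `d` bounds by the square of the
previous sum. -/
lemma summable_card_pow {t : ℝ} (ht : 1 < t) (m : ℕ) :
    Summable fun N : {N : F[X] // N.Monic} =>
      ((monicDivisors N.1).card : ℝ) ^ m * ((anorm F N.1 : ℝ) ^ t)⁻¹ := by
  induction m with
  | zero => simpa using summable_anorm ht
  | succ m ih =>
    set w : F[X] → ℝ := fun N => ((monicDivisors N).card : ℝ) ^ m * ((anorm F N : ℝ) ^ t)⁻¹
      with hw
    have hw0 : ∀ N, 0 ≤ w N := fun N => by positivity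
    have h2 : Summable fun x : {N : F[X] // N.Monic} × {N : F[X] // N.Monic} =>
        w (x.1.1 * x.2.1) := by
      refine Summable.of_nonneg_of_le (fun _ => hw0 _) (fun x => ?_)
        (ih.mul_of_nonneg ih (fun _ => hw0 _) (fun _ => hw0 _))
      obtain ⟨⟨A, hA⟩, ⟨B, hB⟩⟩ := x
      simp only [hw, anorm_mul hA hB, Nat.cast_mul]
      rw [Real.mul_rpow (by positivity) (by positivity), mul_inv, mul_mul_mul_comm, ← mul_pow]
      gcongr
      exact_mod_cast card_monicDivisors_mul_le hA hB
    let e : (Σ N : {N : F[X] // N.Monic}, monicDivisors N.1) →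
        {N : F[X] // N.Monic} × {N : F[X] // N.Monic} := fun x =>
      (⟨x.2.1, (monicDivisors_div x.1.2 x.2.2).1⟩,
        ⟨x.1.1 / x.2.1, (monicDivisors_div x.1.2 x.2.2).2.2⟩)
    have hprod : ∀ x, (e x).1.1 * (e x).2.1 = x.1.1 := fun x =>
      (monicDivisors_div x.1.2 x.2.2).2.1
    have he : Function.Injective e := by
      rintro ⟨⟨M, hM⟩, ⟨A, hA⟩⟩ ⟨⟨N, hN⟩, ⟨B, hB⟩⟩ h
      have h1 : M = N := by
        have := congrArg (fun y => y.1.1 * y.2.1) h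
        simpa only [hprod] using this
      have h2 : A = B := congrArg (fun y => y.1.1) h
      subst h1 h2
      rfl
    have h3 := (h2.comp_injective he).sigma
    simp only [Function.comp, hprod] at h3
    refine h3.congr fun N => ?_
    rw [tsum_fintype, Finset.sum_const, nsmul_eq_mul]
    simp only [hw, Finset.card_univ, Fintype.card_coe]
    ring

lemma hasSum_divisors {E : Type*} [AddCommMonoid E] [TopologicalSpace E] {N : F[X]}
    (hN : N.Monic) (u : F[X] → E) :
    HasSum (fun D : {D : F[X] // D.Monic} => if D.1 ∣ N then u D.1 else 0)
      (∑ D ∈ monicDivisors N, u D) := by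
  have h : HasSum (fun D => if D ∈ monicDivisors N then u D else 0)
      (∑ D ∈ monicDivisors N, u D) := by
    rw [← Finset.sum_congr rfl fun D (hD : D ∈ monicDivisors N) => if_pos hD]
    exact hasSum_sum_of_ne_finset_zero fun D hD => if_neg hD
  rw [← (Subtype.val_injective (p := fun D : F[X] => D.Monic)).hasSum_iff] at h
  · refine h.congr_fun fun D => ?_
    simp [mem_monicDivisors hN.ne_zero, D.2]
  · intro D hD
    exact if_neg fun hD' => hD ⟨⟨D, ((mem_monicDivisors hN.ne_zero).1 hD').1⟩, rfl⟩

lemma hasSum_tuples {E : Type*} [AddCommMonoid E] [TopologicalSpace E] {k : ℕ} {N : F[X]}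
    (hN : N.Monic) (u : (Fin k → F[X]) → E) :
    HasSum (fun H : {H : Fin k → F[X] // ∀ i, (H i).Monic} =>
        if ∀ i, H.1 i ∣ N then u H.1 else 0)
      (∑ H ∈ Fintype.piFinset fun _ => monicDivisors N, u H) := by
  have hmem : ∀ H : Fin k → F[X], (H ∈ Fintype.piFinset fun _ => monicDivisors N) ↔
      (∀ i, (H i).Monic) ∧ ∀ i, H i ∣ N := fun H => by
    simp only [Fintype.mem_piFinset, mem_monicDivisors hN.ne_zero, forall_and]
  have h : HasSum (fun H => if H ∈ Fintype.piFinset fun _ => monicDivisors N then u H else 0)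
      (∑ H ∈ Fintype.piFinset fun _ => monicDivisors N, u H) := by
    rw [← Finset.sum_congr rfl fun H
      (hH : H ∈ Fintype.piFinset fun _ => monicDivisors N) => if_pos hH]
    exact hasSum_sum_of_ne_finset_zero fun H hH => if_neg hH
  rw [← (Subtype.val_injective (p := fun H : Fin k → F[X] => ∀ i, (H i).Monic)).hasSum_iff] at h
  · refine h.congr_fun fun H => ?_
    simp only [Function.comp, hmem, H.2, implies_true, true_and]
  · intro H hH
    exact if_neg fun hH' => hH ⟨⟨H, ((hmem H).1 hH').1⟩, rfl⟩

/-! ### The double sum over `(N; H₁,…,H_k)` with all `H_i ∣ N` -/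

/-- The term `η(G₁,H₁)⋯η(G_k,H_k) / |N|^t` if every `H_i` divides `N`, and `0` otherwise. -/
noncomputable def pairTerm {k : ℕ} (G : Fin k → F[X]) (t : ℝ)
    (x : {N : F[X] // N.Monic} × {H : Fin k → F[X] // ∀ i, (H i).Monic}) : ℂ :=
  if ∀ i, x.2.1 i ∣ x.1.1 then
    (∏ i, _root_.eta p F (G i) (x.2.1 i)) / (((anorm F x.1.1 : ℝ) ^ t : ℝ) : ℂ) else 0

lemma norm_prod_eta_le {k : ℕ} {G H : Fin k → F[X]} (hG : ∀ i, (G i).Monic) {N : F[X]}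
    (hN : N.Monic) (hH : ∀ i, H i ∈ monicDivisors N) :
    ‖∏ i, _root_.eta p F (G i) (H i)‖ ≤
      ((monicDivisors N).card : ℝ) ^ k * ∏ i, (anorm F (G i) : ℝ) := by
  have h : ∀ i, ‖_root_.eta p F (G i) (H i)‖ ≤
      ((monicDivisors N).card : ℝ) * (anorm F (G i) : ℝ) := by
    intro i
    have hi := (mem_monicDivisors hN.ne_zero).1 (hH i)
    refine (norm_eta_le p (hG i) hi.1).trans ?_
    gcongr
    exact monicDivisors_subset hN.ne_zero hi.2
  rw [norm_prod]
  refine (Finset.prod_le_prod (fun _ _ => norm_nonneg _) fun i _ => h i).trans ?_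
  simp [Finset.prod_mul_distrib]

lemma summable_norm_pairTerm {k : ℕ} {G : Fin k → F[X]} (hG : ∀ i, (G i).Monic) {t : ℝ}
    (ht : 1 < t) : Summable fun x => ‖pairTerm p G t x‖ := by
  have hsum : ∀ N : {N : F[X] // N.Monic}, HasSum (fun H => ‖pairTerm p G t (N, H)‖)
      (∑ H ∈ Fintype.piFinset fun _ => monicDivisors N.1,
        ‖∏ i, _root_.eta p F (G i) (H i)‖ * ((anorm F N.1 : ℝ) ^ t)⁻¹) := by
    intro N
    refine (hasSum_tuples N.2 _).congr_fun fun H => ?_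
    simp only [pairTerm]
    have : (0 : ℝ) ≤ (anorm F N.1 : ℝ) ^ t := by positivity
    split_ifs
    · rw [norm_div, Complex.norm_real, Real.norm_of_nonneg this, div_eq_mul_inv]
    · simp
  refine (summable_prod_of_nonneg fun _ => norm_nonneg _).2 ⟨fun N => (hsum N).summable, ?_⟩
  simp only [(hsum _).tsum_eq]
  refine Summable.of_nonneg_of_le (fun N => by positivity) (fun N => ?_)
    ((summable_card_pow (F := F) ht (k + k)).mul_left (∏ i, (anorm F (G i) : ℝ)))
  calc _ ≤ ∑ H ∈ Fintype.piFinset fun _ : Fin k => monicDivisors N.1,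
        (((monicDivisors N.1).card : ℝ) ^ k * ∏ i, (anorm F (G i) : ℝ)) *
          ((anorm F N.1 : ℝ) ^ t)⁻¹ := by
        refine Finset.sum_le_sum fun H hH => ?_
        gcongr
        exact norm_prod_eta_le p hG N.2 (Fintype.mem_piFinset.1 hH)
    _ = _ := by
        rw [Finset.sum_const, nsmul_eq_mul, Fintype.card_piFinset]
        simp
        ring

/-- Summing over `H₁,…,H_k` first: the inner sum factors as a product of the sums
`Σ_{H ∣ N} η(G_i,H)`. -/
lemma tsum_pairTerm_fiber {k : ℕ} (G : Fin k → F[X]) (t : ℝ) (N : {N : F[X] // N.Monic}) :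
    ∑' H, pairTerm p G t (N, H) =
      if N.1 ∣ Finset.gcd Finset.univ G then
        (((anorm F N.1 : ℝ) ^ ((k : ℝ) - t) : ℝ) : ℂ) else 0 := by
  have h := (hasSum_tuples (k := k) N.2 fun H =>
    (∏ i, _root_.eta p F (G i) (H i)) / (((anorm F N.1 : ℝ) ^ t : ℝ) : ℂ)).tsum_eq
  refine h.trans ?_
  rw [← Finset.sum_div, ← Finset.prod_univ_sum (fun _ => monicDivisors N.1)
    fun i H => _root_.eta p F (G i) H]
  simp only [sum_eta_divisors p _ N.2]
  rw [Finset.prod_ite_zero]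
  simp only [Finset.dvd_gcd_iff]
  have hpos : (0 : ℝ) < anorm F N.1 := by exact_mod_cast anorm_pos N.1
  split_ifs
  · rw [Real.rpow_sub hpos, Real.rpow_natCast]
    simp
  · simp

lemma monic_lcm {k : ℕ} {H : Fin k → F[X]} (hH : ∀ i, (H i).Monic) :
    (Finset.lcm Finset.univ H).Monic := by
  refine monic_of_normalize_eq (fun h => ?_) Finset.normalize_lcm
  obtain ⟨i, -, hi⟩ := Finset.lcm_eq_zero_iff.1 h
  exact (hH i).ne_zero hi

lemma monic_gcd {k : ℕ} (hk : 1 ≤ k) {H : Fin k → F[X]} (hH : ∀ i, (H i).Monic) :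
    (Finset.gcd Finset.univ H).Monic := by
  refine monic_of_normalize_eq (fun h => ?_) Finset.normalize_gcd
  exact (hH ⟨0, hk⟩).ne_zero (Finset.gcd_eq_zero_iff.1 h ⟨0, hk⟩ (Finset.mem_univ _))

/-- The pairs `(N, H)` with all `H_i ∣ N` are parametrised by `(M, H) ↦ (M · lcm H, H)`. -/
noncomputable def lcmPair {k : ℕ}
    (x : {N : F[X] // N.Monic} × {H : Fin k → F[X] // ∀ i, (H i).Monic}) :
    {N : F[X] // N.Monic} × {H : Fin k → F[X] // ∀ i, (H i).Monic} :=
  (⟨x.1.1 * Finset.lcm Finset.univ x.2.1, x.1.2.mul (monic_lcm x.2.2)⟩, x.2)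

lemma lcmPair_injective {k : ℕ} : Function.Injective (lcmPair (F := F) (k := k)) := by
  rintro ⟨⟨M, hM⟩, H⟩ ⟨⟨N, hN⟩, K⟩ h
  obtain rfl : H = K := congrArg Prod.snd h
  have h1 : M * Finset.lcm Finset.univ H.1 = N * Finset.lcm Finset.univ H.1 :=
    congrArg (fun y => y.1.1) h
  obtain rfl : M = N := mul_right_cancel₀ (monic_lcm H.2).ne_zero h1
  rfl

lemma pairTerm_lcmPair {k : ℕ} (G : Fin k → F[X]) (t : ℝ)
    (x : {N : F[X] // N.Monic} × {H : Fin k → F[X] // ∀ i, (H i).Monic}) :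
    pairTerm p G t (lcmPair x) = ((1 / (anorm F x.1.1 : ℝ) ^ t : ℝ) : ℂ) *
      ((∏ i, _root_.eta p F (G i) (x.2.1 i)) /
        (((anorm F (Finset.lcm Finset.univ x.2.1) : ℝ) ^ t : ℝ) : ℂ)) := by
  have hdvd : ∀ i, (lcmPair x).2.1 i ∣ (lcmPair x).1.1 := fun i =>
    Dvd.dvd.mul_left (Finset.dvd_lcm (f := x.2.1) (Finset.mem_univ i)) _
  rw [pairTerm, if_pos hdvd]
  simp only [lcmPair]
  rw [anorm_mul x.1.2 (monic_lcm x.2.2), Nat.cast_mul, Real.mul_rpow (by positivity)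
    (by positivity)]
  push_cast
  field_simp

lemma tsum_pairTerm_lcmPair {k : ℕ} (G : Fin k → F[X]) (t : ℝ) :
    ∑' x, pairTerm p G t (lcmPair x) = ∑' x, pairTerm p G t x := by
  refine lcmPair_injective.tsum_eq fun x hx => ?_
  have hdvd : ∀ i, x.2.1 i ∣ x.1.1 := by
    by_contra h
    exact hx (if_neg h)
  obtain ⟨M, hM⟩ : Finset.lcm Finset.univ x.2.1 ∣ x.1.1 := Finset.lcm_dvd fun i _ => hdvd i
  have hMm : M.Monic := monic_of_mul_left (monic_lcm x.2.2) (hM ▸ x.1.2)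
  exact ⟨(⟨M, hMm⟩, x.2), Prod.ext (Subtype.ext (by simp only [lcmPair]; rw [hM, mul_comm])) rfl⟩

/-- `σ_s(g) / |g|^s = Σ_{D ∣ g} |D|^{-s}`, by replacing each divisor with its complement. -/
lemma sigmaS_div {g : F[X]} (hg : g.Monic) (s : ℝ) :
    sigmaS F s g / (anorm F g : ℝ) ^ s = ∑ D ∈ monicDivisors g, (anorm F D : ℝ) ^ (-s) := by
  have h : sigmaS F s g = ∑ D ∈ monicDivisors g, (anorm F D : ℝ) ^ s := by
    unfold sigmaS
    rw [← Finset.tsum_subtype]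
    refine tsum_congr_set_coe (fun D : F[X] => (anorm F D : ℝ) ^ s) ?_
    ext D
    exact (mem_monicDivisors hg.ne_zero).symm
  rw [h, Finset.sum_div]
  refine Finset.sum_nbij' (fun D => g / D) (fun D => g / D)
    (fun R hR => div_mem_monicDivisors hg hR) (fun R hR => div_mem_monicDivisors hg hR)
    (fun R hR => div_div_monicDivisors hg hR) (fun R hR => div_div_monicDivisors hg hR) ?_
  intro D hD
  obtain ⟨h1, h2, h3⟩ := monicDivisors_div hg hD
  have hD0 : (0 : ℝ) < anorm F D := by exact_mod_cast anorm_pos D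
  have hE0 : (0 : ℝ) < anorm F (g / D) := by exact_mod_cast anorm_pos _
  conv_lhs => rw [← h2, anorm_mul h1 h3, Nat.cast_mul, Real.mul_rpow hD0.le hE0.le]
  rw [Real.rpow_neg hE0.le]
  field_simp

end Ramanujan

/-- For real `s` with `k + s > 1` and monic `G₁,…,G_k`, the family
`η(G₁,H₁)⋯η(G_k,H_k)/|Q|^(k+s)` (`Q = [H₁,…,H_k]`) is absolutely summable and
`σ_s((G₁,…,G_k))/|(G₁,…,G_k)|^s = ζ_A(k+s) · Σ_{H₁,…,H_k} η(G₁,H₁)⋯η(G_k,H_k)/|Q|^(k+s)`. -/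
theorem sigma_gcd_eta_expansion (k : ℕ) (hk : 1 ≤ k) (s : ℝ) (hks : 1 < (k : ℝ) + s)
    (G : Fin k → Polynomial F) (hG : ∀ i, (G i).Monic) :
    Summable (fun H : {H : Fin k → Polynomial F // ∀ i, (H i).Monic} =>
      ‖(∏ i, eta p F (G i) (H.1 i)) /
        ((((anorm F (Finset.lcm Finset.univ H.1) : ℝ) ^ ((k : ℝ) + s)) : ℝ) : ℂ)‖) ∧
    (((sigmaS F s (Finset.gcd Finset.univ G) /
        (anorm F (Finset.gcd Finset.univ G) : ℝ) ^ s) : ℝ) : ℂ) =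
      ((zetaA F ((k : ℝ) + s) : ℝ) : ℂ) *
        ∑' H : {H : Fin k → Polynomial F // ∀ i, (H i).Monic},
          (∏ i, eta p F (G i) (H.1 i)) /
            ((((anorm F (Finset.lcm Finset.univ H.1) : ℝ) ^ ((k : ℝ) + s)) : ℝ) : ℂ) := by
  set t : ℝ := (k : ℝ) + s with ht
  have hnorm := summable_norm_pairTerm p hG hks
  have hcomp := hnorm.comp_injective lcmPair_injective
  have hsummable : Summable (fun H : {H : Fin k → Polynomial F // ∀ i, (H i).Monic} =>
      ‖(∏ i, _root_.eta p F (G i) (H.1 i)) /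
        ((((anorm F (Finset.lcm Finset.univ H.1) : ℝ) ^ t) : ℝ) : ℂ)‖) := by
    -- The slice `M = 1` of the sum over `(M, H)`.
    have hinj : Function.Injective fun H : {H : Fin k → Polynomial F // ∀ i, (H i).Monic} =>
        ((⟨1, monic_one⟩ : {N : F[X] // N.Monic}), H) := fun _ _ h => congrArg Prod.snd h
    refine (hcomp.comp_injective hinj).congr fun H => ?_
    simp [pairTerm_lcmPair, anorm]
  refine ⟨hsummable, ?_⟩
  have hzeta : Summable fun N : {N : F[X] // N.Monic} =>
      ‖((1 / (anorm F N.1 : ℝ) ^ t : ℝ) : ℂ)‖ := by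
    refine (summable_anorm hks).congr fun N => ?_
    rw [Complex.norm_real, Real.norm_of_nonneg (by positivity), one_div]
  have hgcd := monic_gcd hk hG
  rw [zetaA, Complex.ofReal_tsum, tsum_mul_tsum_of_summable_norm hzeta hsummable,
    ← tsum_congr fun x => pairTerm_lcmPair p G t x, tsum_pairTerm_lcmPair, hnorm.of_norm.tsum_prod]
  simp only [tsum_pairTerm_fiber, sigmaS_div hgcd]
  rw [(hasSum_divisors hgcd fun D => (((anorm F D : ℝ) ^ ((k : ℝ) - t) : ℝ) : ℂ)).tsum_eq,
    Complex.ofReal_sum, show (k : ℝ) - t = -s by rw [ht]; ring]
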